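/- Let n ≥ 2, let ι be a finite index type, and for each i ∈ ι let G_i be a finite group and S_i ⊆ G_i a subset closed under inverses. Let G = ZMod n × ∏_{i ∈ ι} G_i, let S = {(x, g) : x is a unit of ZMod n and g_i ∈ S_i for all i ∈ ι}, and let X be the Cayley graph of G with connection set S. Fix constants ℓ_i ∈ ℂ for i ∈ ι and let N_i denote the number of group homomorphisms ρ : G_i → ℂ* satisfying ρ(s) = ℓ_i for all s ∈ S_i. Then for every divisor d of n, the eigenspace of the adjacency matrix of X over ℂ for the eigenvalue (∏_{i ∈ ι} ℓ_i·|S_i|)·C(n/d, n) has dimension at least (∏_{i ∈ ι} N_i)·φ(d). -/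

import Mathlib

/-!
Every character of `ZMod n × ∏ i, G i` is an eigenvector of the adjacency matrix of `X`, with
eigenvalue its sum over the connection set. Take the characters
`(x, g) ↦ ψ (u * (n / d) * x) * ∏ i, ρ i (g i)`, where `ψ` is the standard additive character of
`ZMod n`, each `ρ i` is an `ℓ i`-index character, and `u` is a unit of `ZMod n`. Their sum over
the connection set factors as `(∑ x unit, ψ (u * (n / d) * x)) * ∏ i, ℓ i * |S i|`, and the first
factor is the Ramanujan sum because multiplication by `u` permutes the units. Letting `u` range
over lifts of the `φ d` units of `ZMod d` gives `(∏ i, N i) * φ d` distinct characters, which are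
linearly independent by Dedekind's lemma (`linearIndependent_monoidHom`).
-/

open Finset

/-- The Ramanujan sum `C(m, n) = ∑_{1 ≤ k ≤ n, gcd(k,n) = 1} exp(2πi k m / n)`. -/
noncomputable def ramanujanSum (m : ℕ) (n : ℕ) : ℂ :=
  ∑ k ∈ (Finset.Icc 1 n).filter (fun k => Nat.gcd k n = 1),
    Complex.exp (2 * Real.pi * Complex.I * k * m / n)

/-- The Ramanujan sum as a sum over the units of `ZMod n`, twisted by an arbitrary unit `u`. -/
lemma sum_units_stdAddChar (n : ℕ) [NeZero n] (hn : 2 ≤ n) (m : ℕ) (u : (ZMod n)ˣ) :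
    ∑ x : ZMod n, (if IsUnit x then ZMod.stdAddChar ((u : ZMod n) * (m : ZMod n) * x) else 0) =
      ramanujanSum m n := by
  have h1 : ∑ x : ZMod n,
      (if IsUnit x then ZMod.stdAddChar ((u : ZMod n) * (m : ZMod n) * x) else (0 : ℂ)) =
      ∑ x : ZMod n, (if IsUnit x then ZMod.stdAddChar ((m : ZMod n) * x) else (0 : ℂ)) := by
    refine Fintype.sum_equiv (Units.mulLeft u) _ _ fun x => ?_
    simp only [Units.mulLeft_apply, Units.isUnit_units_mul]
    rw [show (u : ZMod n) * (m : ZMod n) * x = (m : ZMod n) * (u * x) by ring]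
  rw [h1, ramanujanSum, ← Finset.sum_filter]
  symm
  refine Finset.sum_bij (fun k _ => (k : ZMod n)) ?_ ?_ ?_ ?_
  · intro k hk
    simp only [Finset.mem_filter, Finset.mem_univ, true_and] at hk ⊢
    exact (ZMod.isUnit_iff_coprime k n).2 hk.2
  · intro k hk k' hk' h
    -- `n` itself is excluded by coprimality, so both representatives are below `n`
    have key : ∀ k ∈ (Finset.Icc 1 n).filter (fun k => Nat.gcd k n = 1), k < n := by
      intro k hk
      simp only [Finset.mem_filter, Finset.mem_Icc] at hk
      rcases hk.1.2.lt_or_eq with h | h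
      · exact h
      · have := hk.2
        rw [h, Nat.gcd_self] at this
        omega
    have h2 := (ZMod.natCast_eq_natCast_iff' k k' n).1 h
    rwa [Nat.mod_eq_of_lt (key k hk), Nat.mod_eq_of_lt (key k' hk')] at h2
  · intro x hx
    simp only [Finset.mem_filter, Finset.mem_univ, true_and] at hx
    have hc : Nat.gcd x.val n = 1 := by
      rw [← ZMod.natCast_zmod_val x] at hx
      exact (ZMod.isUnit_iff_coprime _ n).1 hx
    refine ⟨x.val, ?_, ZMod.natCast_zmod_val x⟩
    simp only [Finset.mem_filter, Finset.mem_Icc]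
    refine ⟨⟨Nat.one_le_iff_ne_zero.2 fun h0 => ?_, (ZMod.val_lt x).le⟩, hc⟩
    rw [h0, Nat.gcd_zero_left] at hc
    omega
  · intro k _
    have := ZMod.stdAddChar_coe (N := n) ((m * k : ℕ) : ℤ)
    push_cast at this
    rw [this]
    congr 1
    ring

/-- The character `(x, g) ↦ ψ (a * x) * ∏ i, ρ i (g i)`, with `ψ` the standard additive character
of `ZMod n`. -/
noncomputable def prodChar {n : ℕ} [NeZero n] {ι : Type*} [Fintype ι]
    (G : ι → Type*) [∀ i, Group (G i)] (a : ZMod n) (ρ : ∀ i, G i →* ℂˣ) :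
    Multiplicative (ZMod n) × (∀ i, G i) →* ℂ where
  toFun v := ZMod.stdAddChar (a * v.1.toAdd) * ∏ i, (ρ i (v.2 i) : ℂ)
  map_one' := by simp
  map_mul' v w := by
    simp only [Prod.fst_mul, Prod.snd_mul, toAdd_mul, mul_add, AddChar.map_add_eq_mul,
      Pi.mul_apply, map_mul, Units.val_mul, Finset.prod_mul_distrib]
    ring

lemma prodChar_apply {n : ℕ} [NeZero n] {ι : Type*} [Fintype ι]
    (G : ι → Type*) [∀ i, Group (G i)] (a : ZMod n) (ρ : ∀ i, G i →* ℂˣ)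
    (v : Multiplicative (ZMod n) × (∀ i, G i)) :
    prodChar G a ρ v = ZMod.stdAddChar (a * v.1.toAdd) * ∏ i, (ρ i (v.2 i) : ℂ) := rfl

lemma prodChar_injective {n : ℕ} [NeZero n] {ι : Type*} [Fintype ι] [DecidableEq ι]
    (G : ι → Type*) [∀ i, Group (G i)] {a b : ZMod n} {ρ σ : ∀ i, G i →* ℂˣ}
    (h : prodChar G a ρ = prodChar G b σ) : a = b ∧ ρ = σ := by
  constructor
  · have := DFunLike.congr_fun h (Multiplicative.ofAdd 1, 1)
    simp only [prodChar_apply, toAdd_ofAdd, mul_one, Pi.one_apply, map_one, Units.val_one,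
      Finset.prod_const_one] at this
    exact ZMod.injective_stdAddChar this
  · funext i
    ext g
    have := DFunLike.congr_fun h (1, Pi.mulSingle i g)
    simp only [prodChar_apply, toAdd_one, mul_zero, AddChar.map_zero_eq_one, one_mul] at this
    have aux : ∀ τ : ∀ i, G i →* ℂˣ,
        ∏ j, (τ j (Pi.mulSingle i g j : G j) : ℂ) = τ i g := by
      intro τ
      rw [Finset.prod_eq_single i]
      · simp
      · intro j _ hj
        simp [Pi.mulSingle_eq_of_ne hj]
      · simp
    rwa [aux, aux] at this

/-- Multiples of `n / d` by units of `ZMod n` determine the unit modulo `d`. -/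
lemma unitsMap_eq_of_mul_eq {n d : ℕ} [NeZero n] (hdn : d ∣ n) {u v : (ZMod n)ˣ}
    (h : (u : ZMod n) * ((n / d : ℕ) : ZMod n) = v * ((n / d : ℕ) : ZMod n)) :
    ZMod.unitsMap hdn u = ZMod.unitsMap hdn v := by
  obtain ⟨e, rfl⟩ := hdn
  have hne : d * e ≠ 0 := NeZero.ne _
  have hd : 0 < d := Nat.pos_of_ne_zero fun h => hne (by simp [h])
  have he : e ≠ 0 := fun h => hne (by simp [h])
  rw [Nat.mul_div_cancel_left _ hd] at h
  ext
  rw [ZMod.unitsMap_val, ZMod.unitsMap_val]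
  rw [← ZMod.natCast_zmod_val (u : ZMod (d * e)), ← ZMod.natCast_zmod_val (v : ZMod (d * e)),
    ← Nat.cast_mul, ← Nat.cast_mul, ZMod.natCast_eq_natCast_iff] at h
  have h2 := Nat.ModEq.mul_right_cancel' he h
  rw [ZMod.cast_eq_val, ZMod.cast_eq_val]
  exact (ZMod.natCast_eq_natCast_iff _ _ _).2 h2

theorem cayley_prod_eigenspace_dim (n : ℕ) (hn : 2 ≤ n) [NeZero n]
    {ι : Type*} [Fintype ι] [DecidableEq ι]
    (G : ι → Type*) [∀ i, Group (G i)] [∀ i, Fintype (G i)] [∀ i, DecidableEq (G i)]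
    (S : ∀ i, Finset (G i)) (hSinv : ∀ i, ∀ s ∈ S i, s⁻¹ ∈ S i)
    (X : SimpleGraph (ZMod n × ∀ i, G i)) [DecidableRel X.Adj]
    (hX : ∀ u v : ZMod n × ∀ i, G i,
      X.Adj u v ↔ (IsUnit (u.1 - v.1) ∧ ∀ i, u.2 i * (v.2 i)⁻¹ ∈ S i))
    (ℓ : ι → ℂ)
    (N : ι → ℕ)
    (hN : ∀ i, N i = Nat.card {ρ : G i →* ℂˣ // ∀ s ∈ S i, ((ρ s : ℂˣ) : ℂ) = ℓ i})
    (d : ℕ) (hdn : d ∣ n) :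
    (∏ i, N i) * Nat.totient d ≤
      Module.finrank ℂ
        ↥(Module.End.eigenspace (Matrix.toLin' (X.adjMatrix ℂ))
          ((∏ i, ℓ i * ((S i).card : ℂ)) * ramanujanSum (n / d) n)) := by
  set E := Module.End.eigenspace (Matrix.toLin' (X.adjMatrix ℂ))
          ((∏ i, ℓ i * ((S i).card : ℂ)) * ramanujanSum (n / d) n) with hE
  have : NeZero d := ⟨fun h => NeZero.ne n (Nat.eq_zero_of_zero_dvd (h ▸ hdn))⟩
  choose lift hlift using ZMod.unitsMap_surjective hdn
  let I := (∀ i, {ρ : G i →* ℂˣ // ∀ s ∈ S i, ((ρ s : ℂˣ) : ℂ) = ℓ i}) × (ZMod d)ˣ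
  let T : I → (Multiplicative (ZMod n) × (∀ i, G i) →* ℂ) := fun t =>
    prodChar G ((lift t.2 : ZMod n) * ((n / d : ℕ) : ZMod n)) (fun i => (t.1 i).1)
  have hT : Function.Injective T := by
    rintro ⟨ρ, k⟩ ⟨σ, k'⟩ h
    obtain ⟨h1, h2⟩ := prodChar_injective G h
    have h3 := unitsMap_eq_of_mul_eq hdn h1
    rw [hlift, hlift] at h3
    refine Prod.ext (funext fun i => Subtype.ext (congrFun h2 i)) h3
  have hli : LinearIndependent ℂ
      (fun t : I => (fun v : ZMod n × ∀ i, G i => T t (Multiplicative.ofAdd v.1, v.2))) :=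
    (linearIndependent_monoidHom (Multiplicative (ZMod n) × (∀ i, G i)) ℂ).comp T hT
  have hmem : ∀ t : I,
      (fun v : ZMod n × ∀ i, G i => T t (Multiplicative.ofAdd v.1, v.2)) ∈ E := by
    intro t
    rw [hE, Module.End.mem_eigenspace_iff]
    ext u
    rw [Matrix.toLin'_apply, Matrix.mulVec, dotProduct]
    -- translate by `u`, using the symmetry of adjacency to bring the connection set out
    let e : (ZMod n × ∀ i, G i) ≃ (ZMod n × ∀ i, G i) :=
      (Equiv.addRight u.1).prodCongr (Equiv.mulRight u.2)
    rw [← Equiv.sum_comp e]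
    have hterm : ∀ w : ZMod n × ∀ i, G i,
        X.adjMatrix ℂ u (e w) * T t (Multiplicative.ofAdd (e w).1, (e w).2) =
        (if IsUnit w.1 then ZMod.stdAddChar
          ((lift t.2 : ZMod n) * ((n / d : ℕ) : ZMod n) * w.1) else 0) *
        (∏ i, if w.2 i ∈ S i then (((t.1 i).1 (w.2 i) : ℂˣ) : ℂ) else 0) *
        T t (Multiplicative.ofAdd u.1, u.2) := by
      intro w
      have hadj : X.Adj u (e w) ↔ (IsUnit w.1 ∧ ∀ i, w.2 i ∈ S i) := by
        rw [X.adj_comm, hX]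
        simp [e]
      have hmul : T t (Multiplicative.ofAdd (e w).1, (e w).2) =
          T t (Multiplicative.ofAdd w.1, w.2) * T t (Multiplicative.ofAdd u.1, u.2) := by
        rw [← map_mul]
        rfl
      rw [SimpleGraph.adjMatrix_apply, hmul, Finset.prod_ite_zero]
      simp only [hadj, Finset.mem_univ, true_imp_iff]
      by_cases h1 : IsUnit w.1 <;> by_cases h2 : ∀ i, w.2 i ∈ S i <;>
        simp [h1, h2, T, prodChar_apply]
    rw [Finset.sum_congr rfl fun w _ => hterm w, ← Finset.sum_mul, Fintype.sum_prod_type]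
    simp only [← Finset.mul_sum]
    rw [← Finset.sum_mul, sum_units_stdAddChar n hn]
    have hprod : ∑ g : ∀ i, G i,
        (∏ i, if g i ∈ S i then (((t.1 i).1 (g i) : ℂˣ) : ℂ) else 0) =
        ∏ i, ℓ i * ((S i).card : ℂ) := by
      rw [← Fintype.prod_sum (fun i (g : G i) =>
        if g ∈ S i then (((t.1 i).1 g : ℂˣ) : ℂ) else 0)]
      refine Finset.prod_congr rfl fun i _ => ?_
      rw [← Finset.sum_filter, Finset.filter_mem_eq_inter, Finset.univ_inter,
        Finset.sum_congr rfl (fun s hs => (t.1 i).2 s hs), Finset.sum_const, nsmul_eq_mul, mul_comm]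
    rw [hprod, mul_comm (ramanujanSum _ _)]
    rfl
  have hli' : LinearIndependent ℂ (fun t : I => (⟨_, hmem t⟩ : E)) :=
    LinearIndependent.of_comp E.subtype hli
  have : Finite I := hli'.finite
  have := Fintype.ofFinite I
  have hcard := hli'.fintype_card_le_finrank
  rw [← Nat.card_eq_fintype_card, Nat.card_prod, Nat.card_pi, Nat.card_eq_fintype_card,
    ZMod.card_units_eq_totient] at hcard
  simpa only [hN] using hcard
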